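/- Let ν be a σ-finite measure on a measurable space and let f and g be two ν-a.e. strictly positive probability densities with respect to ν such that I := ∫ g log(g/f) dν ∈ (0,∞). Define ψ(x) := sup_{θ ≤ 0} { θx − log ∫ g^{1+θ} f^{−θ} dν } for x ∈ ℝ, taking values in [0,∞]. Then ψ is nonnegative and convex, ψ(I) = 0, and ψ(x) > 0 for every real x < I. -/

import Mathlib

open MeasureTheory
open scoped ENNReal BigOperators

/-!
Under the probability measure `g dν`, the integral `∫ g^{1+θ} f^{-θ} dν` is the moment generating
function `M(θ)` of `X = log (g/f)`, and `I` is the mean of `X`. So `ψ` is a one-sided Legendre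
transform of `log M`: it is convex as a supremum of affine functions, nonnegative because
`log M(0) = 0`, and zero at the mean because `θ I ≤ log M(θ)` by Jensen's inequality.

For `x < I`, the left derivative of `log M` at `0` is `I`, so `θ x - log M(θ) > 0` for small
`θ < 0`. Here `M` need not be finite to the right of `0`, but `M(-1) = ∫ f dν` is finite, and by
convexity the difference quotients of `θ ↦ exp (θ X)` on `[-1, 0)` lie between the one at `-1`
and `X`; dominated convergence then gives the left derivative.
-/

open ProbabilityTheory Set Filter Topology

section Legendre

/-- The Legendre transform of `c` with slopes restricted to `s`. It is `EReal`-valued so that an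
infinite supremum is not replaced by a junk value. -/
noncomputable def legendreOn (s : Set ℝ) (c : ℝ → ℝ) (x : ℝ) : EReal :=
  ⨆ θ ∈ s, ((θ * x - c θ : ℝ) : EReal)

variable {s : Set ℝ} {c : ℝ → ℝ} {θ m x : ℝ}

lemma coe_le_legendreOn (hθ : θ ∈ s) (x : ℝ) :
    ((θ * x - c θ : ℝ) : EReal) ≤ legendreOn s c x :=
  le_iSup₂ (f := fun (η : ℝ) (_ : η ∈ s) => ((η * x - c η : ℝ) : EReal)) θ hθ

lemma legendreOn_nonneg (hs : 0 ∈ s) (hc : c 0 = 0) (x : ℝ) : 0 ≤ legendreOn s c x := by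
  simpa [hc] using coe_le_legendreOn (c := c) hs x

lemma legendreOn_convex_combination_le (s : Set ℝ) (c : ℝ → ℝ) {x y a b : ℝ} (ha : 0 ≤ a)
    (hb : 0 ≤ b) (hab : a + b = 1) :
    legendreOn s c (a * x + b * y)
      ≤ (a : EReal) * legendreOn s c x + (b : EReal) * legendreOn s c y := by
  refine iSup₂_le fun θ hθ => ?_
  have affine : θ * (a * x + b * y) - c θ = a * (θ * x - c θ) + b * (θ * y - c θ) := by
    linear_combination c θ * hab
  rw [affine, EReal.coe_add, EReal.coe_mul a, EReal.coe_mul b]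
  exact add_le_add
    (mul_le_mul_of_nonneg_left (coe_le_legendreOn hθ x) (EReal.coe_nonneg.2 ha))
    (mul_le_mul_of_nonneg_left (coe_le_legendreOn hθ y) (EReal.coe_nonneg.2 hb))

lemma legendreOn_nonpos_iff : legendreOn s c x ≤ 0 ↔ ∀ θ ∈ s, θ * x ≤ c θ := by
  simp only [legendreOn, iSup₂_le_iff, EReal.coe_nonpos, sub_nonpos]

lemma legendreOn_Iic_pos_of_hasDerivWithinAt (hc : HasDerivWithinAt c m (Iio 0) 0)
    (hc0 : c 0 = 0) (hx : x < m) : 0 < legendreOn (Iic 0) c x := by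
  have slope_tendsto := (hasDerivWithinAt_iff_tendsto_slope' self_notMem_Iio).1 hc
  obtain ⟨θ, hxθ, hθ⟩ :=
    ((slope_tendsto.eventually (lt_mem_nhds hx)).and self_mem_nhdsWithin).exists
  rw [slope_def_field, hc0, sub_zero, sub_zero, lt_div_iff_of_neg hθ, mul_comm] at hxθ
  exact (EReal.coe_pos.2 (sub_pos.2 hxθ)).trans_le (coe_le_legendreOn (Iio_subset_Iic_self hθ) x)

end Legendre

section SlopeExp

variable {t θ : ℝ}

lemma slope_exp_mul_zero_mono (ht : t ≠ 0) (hθ : θ ≠ 0) (htθ : t ≤ θ) (x : ℝ) :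
    slope (fun u => Real.exp (u * x)) 0 t ≤ slope (fun u => Real.exp (u * x)) 0 θ := by
  have convex : ConvexOn ℝ univ fun u => Real.exp (u * x) :=
    convexOn_exp.comp_linearMap (LinearMap.mulRight ℝ x)
  simpa only [slope_def_field] using
    convex.secant_mono (mem_univ 0) (mem_univ t) (mem_univ θ) ht hθ htθ

lemma slope_exp_mul_zero_le (hθ : θ < 0) (x : ℝ) :
    slope (fun u => Real.exp (u * x)) 0 θ ≤ x := by
  rw [slope_def_field, sub_zero, zero_mul, Real.exp_zero, div_le_iff_of_neg hθ]
  linarith [Real.add_one_le_exp (θ * x)]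

lemma abs_slope_exp_mul_zero_le (htθ : t ≤ θ) (hθ : θ < 0) (x : ℝ) :
    |slope (fun u => Real.exp (u * x)) 0 θ| ≤ |slope (fun u => Real.exp (u * x)) 0 t| + |x| :=
  (abs_le_max_abs_abs (slope_exp_mul_zero_mono (htθ.trans_lt hθ).ne hθ.ne htθ x)
    (slope_exp_mul_zero_le hθ x)).trans (max_le_add_of_nonneg (abs_nonneg _) (abs_nonneg _))

lemma tendsto_slope_exp_mul_zero (x : ℝ) :
    Tendsto (slope (fun u => Real.exp (u * x)) 0) (𝓝[<] 0) (𝓝 x) := by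
  have hasDerivAt_exp : HasDerivAt (fun u => Real.exp (u * x)) x 0 := by
    simpa using ((hasDerivAt_id (0 : ℝ)).mul_const x).exp
  exact (hasDerivWithinAt_iff_tendsto_slope' self_notMem_Iio).1 hasDerivAt_exp.hasDerivWithinAt

end SlopeExp

section MomentGeneratingFunction

variable {Ω : Type*} [MeasurableSpace Ω] {μ : Measure Ω} {X : Ω → ℝ} {t θ : ℝ}

lemma integrable_slope_exp_mul_zero [IsFiniteMeasure μ] (hθ : θ ∈ integrableExpSet X μ) :
    Integrable (fun ω => slope (fun u => Real.exp (u * X ω)) 0 θ) μ := by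
  simp only [slope_def_field, zero_mul, Real.exp_zero]
  exact (Integrable.sub hθ (integrable_const 1)).div_const _

lemma slope_mgf_zero [IsFiniteMeasure μ] (hθ : θ ∈ integrableExpSet X μ) :
    slope (mgf X μ) 0 θ = ∫ ω, slope (fun u => Real.exp (u * X ω)) 0 θ ∂μ := by
  simp only [slope_def_field, mgf, zero_mul, Real.exp_zero]
  rw [integral_div, integral_sub hθ (integrable_const 1)]

lemma hasDerivWithinAt_mgf_zero_Iio [IsFiniteMeasure μ] (hX : Integrable X μ) (ht : t < 0)
    (hexp : t ∈ integrableExpSet X μ) : HasDerivWithinAt (mgf X μ) μ[X] (Iio 0) 0 := by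
  have integrable_exp : ∀ᶠ θ in 𝓝[<] 0, θ ∈ integrableExpSet X μ := by
    filter_upwards [Ioo_mem_nhdsLT ht] with θ hθ
    exact integrable_exp_mul_of_le_of_le hexp (by simp) hθ.1.le hθ.2.le
  have integral_tendsto : Tendsto (fun θ => ∫ ω, slope (fun u => Real.exp (u * X ω)) 0 θ ∂μ)
      (𝓝[<] 0) (𝓝 μ[X]) := by
    refine tendsto_integral_filter_of_dominated_convergence
      (fun ω => |slope (fun u => Real.exp (u * X ω)) 0 t| + |X ω|) ?_ ?_
      ((integrable_slope_exp_mul_zero hexp).abs.add hX.abs)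
      (ae_of_all _ fun ω => tendsto_slope_exp_mul_zero (X ω))
    · exact integrable_exp.mono fun θ hθ => (integrable_slope_exp_mul_zero hθ).aestronglyMeasurable
    · filter_upwards [Ioo_mem_nhdsLT ht] with θ hθ
      exact ae_of_all _ fun ω => abs_slope_exp_mul_zero_le hθ.1.le hθ.2 (X ω)
  rw [hasDerivWithinAt_iff_tendsto_slope' self_notMem_Iio]
  exact integral_tendsto.congr' (integrable_exp.mono fun θ hθ => (slope_mgf_zero hθ).symm)

variable [IsProbabilityMeasure μ]

lemma hasDerivWithinAt_cgf_zero_Iio (hX : Integrable X μ) (ht : t < 0)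
    (hexp : t ∈ integrableExpSet X μ) : HasDerivWithinAt (cgf X μ) μ[X] (Iio 0) 0 := by
  have log_deriv := (hasDerivWithinAt_mgf_zero_Iio hX ht hexp).log (by simp)
  rwa [mgf_zero, div_one] at log_deriv

lemma mul_integral_le_cgf (hX : Integrable X μ) (hθ : θ ∈ integrableExpSet X μ) :
    θ * μ[X] ≤ cgf X μ θ := by
  have jensen : Real.exp (∫ ω, θ * X ω ∂μ) ≤ ∫ ω, Real.exp (θ * X ω) ∂μ :=
    convexOn_exp.map_integral_le Real.continuous_exp.continuousOn isClosed_univ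
      (ae_of_all _ fun _ => mem_univ _) (hX.const_mul θ) hθ
  rw [integral_const_mul] at jensen
  exact (Real.le_log_iff_exp_le (mgf_pos hθ)).2 jensen

lemma mul_integral_le_cgf_of_nonpos (hX : Integrable X μ) (hmean : 0 ≤ μ[X]) (hθ : θ ≤ 0) :
    θ * μ[X] ≤ cgf X μ θ := by
  by_cases hexp : θ ∈ integrableExpSet X μ
  · exact mul_integral_le_cgf hX hexp
  · -- Here `cgf X μ θ` is the junk value `0` in place of `∞`.
    rw [cgf_undef hexp]
    exact mul_nonpos_of_nonpos_of_nonneg hθ hmean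

end MomentGeneratingFunction

section Density

variable {E : Type*} [MeasurableSpace E] {ν : Measure E} {f g : E → ℝ}

lemma isProbabilityMeasure_withDensity_ofReal (hg : 0 ≤ᵐ[ν] g) (hgprob : ∫ t, g t ∂ν = 1) :
    IsProbabilityMeasure (ν.withDensity fun t => ENNReal.ofReal (g t)) := by
  have hgint : Integrable g ν := .of_integral_ne_zero (by simp [hgprob])
  refine ⟨?_⟩
  rw [withDensity_apply _ .univ, setLIntegral_univ, ← ofReal_integral_eq_lintegral_ofReal hgint hg,
    hgprob, ENNReal.ofReal_one]

lemma integral_withDensity_ofReal (hgm : AEMeasurable g ν) (hg : 0 ≤ᵐ[ν] g) (h : E → ℝ) :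
    ∫ t, h t ∂ν.withDensity (fun t => ENNReal.ofReal (g t)) = ∫ t, g t * h t ∂ν := by
  rw [integral_withDensity_eq_integral_toReal_smul₀ hgm.ennreal_ofReal (by simp)]
  refine integral_congr_ae ?_
  filter_upwards [hg] with t ht
  rw [ENNReal.toReal_ofReal ht, smul_eq_mul]

lemma integrable_withDensity_ofReal_iff (hgm : AEMeasurable g ν) (hg : 0 ≤ᵐ[ν] g) {h : E → ℝ} :
    Integrable h (ν.withDensity fun t => ENNReal.ofReal (g t)) ↔
      Integrable (fun t => g t * h t) ν := by
  rw [integrable_withDensity_iff_integrable_smul₀' hgm.ennreal_ofReal (by simp)]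
  refine integrable_congr ?_
  filter_upwards [hg] with t ht
  rw [ENNReal.toReal_ofReal ht, smul_eq_mul]

lemma mul_exp_mul_log_div {a b : ℝ} (ha : 0 < a) (hb : 0 < b) (θ : ℝ) :
    b * Real.exp (θ * Real.log (b / a)) = b ^ (1 + θ) * a ^ (-θ) := by
  rw [mul_comm θ, ← Real.rpow_def_of_pos (div_pos hb ha), Real.div_rpow hb.le ha.le,
    Real.rpow_add hb, Real.rpow_one, Real.rpow_neg ha.le, mul_assoc, div_eq_mul_inv]

lemma ae_mul_exp_mul_log_div (hf : ∀ᵐ t ∂ν, 0 < f t) (hg : ∀ᵐ t ∂ν, 0 < g t) (θ : ℝ) :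
    (fun t => g t * Real.exp (θ * Real.log (g t / f t))) =ᵐ[ν]
      fun t => g t ^ (1 + θ) * f t ^ (-θ) := by
  filter_upwards [hf, hg] with t hft hgt using mul_exp_mul_log_div hft hgt θ

lemma mgf_log_div_withDensity (hgm : AEMeasurable g ν) (hf : ∀ᵐ t ∂ν, 0 < f t)
    (hg : ∀ᵐ t ∂ν, 0 < g t) (θ : ℝ) :
    mgf (fun t => Real.log (g t / f t)) (ν.withDensity fun t => ENNReal.ofReal (g t)) θ =
      ∫ t, g t ^ (1 + θ) * f t ^ (-θ) ∂ν := by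
  rw [mgf, integral_withDensity_ofReal hgm (hg.mono fun _ => le_of_lt)]
  exact integral_congr_ae (ae_mul_exp_mul_log_div hf hg θ)

lemma neg_one_mem_integrableExpSet_log_div (hgm : AEMeasurable g ν) (hfint : Integrable f ν)
    (hf : ∀ᵐ t ∂ν, 0 < f t) (hg : ∀ᵐ t ∂ν, 0 < g t) :
    -1 ∈ integrableExpSet (fun t => Real.log (g t / f t))
      (ν.withDensity fun t => ENNReal.ofReal (g t)) := by
  rw [integrableExpSet, mem_ofPred_eq,
    integrable_withDensity_ofReal_iff hgm (hg.mono fun _ => le_of_lt),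
    integrable_congr (ae_mul_exp_mul_log_div hf hg (-1))]
  simpa using hfint

end Density

theorem stmt_4_general {Ω : Type*} [MeasurableSpace Ω] (μ : Measure Ω) [IsProbabilityMeasure μ]
    (X : Ω → ℝ) (hX : Integrable X μ) (hexp : ∃ t < 0, t ∈ integrableExpSet X μ)
    (hmean : 0 ≤ μ[X]) :
    let ψ : ℝ → EReal := legendreOn (Iic 0) (cgf X μ)
    (∀ x : ℝ, 0 ≤ ψ x) ∧
    (∀ x y a b : ℝ, 0 ≤ a → 0 ≤ b → a + b = 1 →
      ψ (a * x + b * y) ≤ (a : EReal) * ψ x + (b : EReal) * ψ y) ∧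
    ψ μ[X] = 0 ∧
    (∀ x : ℝ, x < μ[X] → 0 < ψ x) := by
  intro ψ
  obtain ⟨t, ht, htexp⟩ := hexp
  have nonneg : ∀ x, 0 ≤ ψ x := legendreOn_nonneg self_mem_Iic cgf_zero
  refine ⟨nonneg, fun x y a b => legendreOn_convex_combination_le _ _, ?_, fun x hx => ?_⟩
  · exact le_antisymm
      (legendreOn_nonpos_iff.2 fun θ hθ => mul_integral_le_cgf_of_nonpos hX hmean hθ) (nonneg _)
  · exact legendreOn_Iic_pos_of_hasDerivWithinAt (hasDerivWithinAt_cgf_zero_Iio hX ht htexp)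
      cgf_zero hx

/-- Properties of the large deviation rate function
`ψ(x) = sup_{θ ≤ 0} (θ x - log ∫ g^{1+θ} f^{-θ} dν)`, viewed as an
extended-real-valued function: it is nonnegative, convex (in the extended-real
sense), vanishes at `I = ∫ g log(g/f) dν`, and is strictly positive for `x < I`. -/
theorem stmt_4
    {E : Type*} [MeasurableSpace E] (ν : Measure E) [SigmaFinite ν]
    (f g : E → ℝ) (hf : Measurable f) (hg : Measurable g)
    (hfpos : ∀ᵐ t ∂ν, 0 < f t) (hgpos : ∀ᵐ t ∂ν, 0 < g t)
    (hfprob : ∫ t, f t ∂ν = 1) (hgprob : ∫ t, g t ∂ν = 1)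
    (hI_int : Integrable (fun t => g t * Real.log (g t / f t)) ν)
    (hI_pos : 0 < ∫ t, g t * Real.log (g t / f t) ∂ν) :
    let ψ : ℝ → EReal := fun x =>
      ⨆ θ ∈ Set.Iic (0 : ℝ),
        ((θ * x - Real.log (∫ t, g t ^ (1 + θ) * f t ^ (-θ) ∂ν) : ℝ) : EReal)
    (∀ x : ℝ, 0 ≤ ψ x) ∧
    (∀ x y a b : ℝ, 0 ≤ a → 0 ≤ b → a + b = 1 →
      ψ (a * x + b * y) ≤ (a : EReal) * ψ x + (b : EReal) * ψ y) ∧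
    ψ (∫ t, g t * Real.log (g t / f t) ∂ν) = 0 ∧
    (∀ x : ℝ, x < ∫ t, g t * Real.log (g t / f t) ∂ν → 0 < ψ x) := by
  have hg_nonneg : 0 ≤ᵐ[ν] g := hgpos.mono fun _ => le_of_lt
  have hfint : Integrable f ν := .of_integral_ne_zero (by simp [hfprob])
  have := isProbabilityMeasure_withDensity_ofReal hg_nonneg hgprob
  simp only [← mgf_log_div_withDensity hg.aemeasurable hfpos hgpos,
    ← integral_withDensity_ofReal hg.aemeasurable hg_nonneg] at hI_pos ⊢
  exact stmt_4_general _ _ ((integrable_withDensity_ofReal_iff hg.aemeasurable hg_nonneg).2 hI_int)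
    ⟨-1, neg_one_lt_zero,
      neg_one_mem_integrableExpSet_log_div hg.aemeasurable hfint hfpos hgpos⟩ hI_pos.le
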